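/- arXiv:2203.01230 — 4 statements merged into one kernel-verified Lean document; each statement's English description precedes it below -/
import Mathlib

section
/- Let Ω, τ, ζ, s_* ∈ ℝ, m ∈ ℤ, j ∈ ℕ, h ∈ ℂ, and let u : ℝ → ℂ satisfy u(s) = (−1)^j · u(s_* − s) for all s ∈ [0, s_*], with u(s₀) ≠ 0 for some s₀ ∈ [0, s_*]. Define Ψ(t,s,φ) = exp(−iΩt)·u(s)·exp(i m φ). If Ψ(t,s,φ) − h·Ψ(t−τ, s_* − s, φ−ζ) = 0 holds for all t, φ ∈ ℝ and all s ∈ [0, s_*], then necessarily h = (−1)^j · exp(i(−Ωτ + mζ)). -/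
open Complex

/-- The spiral wave Ansatz `exp (-iΩt) · u s · exp (imφ)`. Time, angle and the two parameters are
complex, and the radial variable ranges over any type, so that `m` need not be an integer and a
radial shift is just a second point of `X`. -/
noncomputable def spiralWave {X : Type*} (Ω m : ℂ) (u : X → ℂ) (t : ℂ) (s : X) (φ : ℂ) : ℂ :=
  exp (-I * Ω * t) * u s * exp (I * m * φ)

namespace spiralWave

variable {X : Type*} (Ω m : ℂ) {u : X → ℂ} {s s' : X}

theorem ne_zero (hu : u s ≠ 0) (t φ : ℂ) : spiralWave Ω m u t s φ ≠ 0 :=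
  mul_ne_zero (mul_ne_zero (exp_ne_zero _) hu) (exp_ne_zero _)

theorem eq_mul_of_profile_eq_mul {c : ℂ} (hu : u s = c * u s') (t φ : ℂ) :
    spiralWave Ω m u t s φ = c * spiralWave Ω m u t s' φ := by
  simp only [spiralWave, hu]
  ring

variable (u s) in
theorem eq_exp_mul_sub_sub (t τ φ ζ : ℂ) :
    spiralWave Ω m u t s φ =
      exp (I * (-Ω * τ + m * ζ)) * spiralWave Ω m u (t - τ) s (φ - ζ) := by
  have time_phase : exp (-I * Ω * t) = exp (-I * Ω * τ) * exp (-I * Ω * (t - τ)) := by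
    rw [← exp_add]; ring_nf
  have angle_phase : exp (I * m * φ) = exp (I * m * ζ) * exp (I * m * (φ - ζ)) := by
    rw [← exp_add]; ring_nf
  have shift_phase : exp (I * (-Ω * τ + m * ζ)) = exp (-I * Ω * τ) * exp (I * m * ζ) := by
    rw [← exp_add]; ring_nf
  rw [spiralWave, spiralWave, time_phase, angle_phase, shift_phase]
  ring

end spiralWave

theorem multiplicative_factor_unique_reflection_shift_general {X : Type*}
    {Ω m t τ φ ζ c h : ℂ} {u : X → ℂ} {s s' : X}
    (hsym : u s = c * u s') (hu : u s ≠ 0)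
    (hinv : spiralWave Ω m u t s φ - h * spiralWave Ω m u (t - τ) s' (φ - ζ) = 0) :
    h = c * exp (I * (-Ω * τ + m * ζ)) := by
  have hu' : u s' ≠ 0 := right_ne_zero_of_mul (hsym ▸ hu)
  refine mul_right_cancel₀ (spiralWave.ne_zero Ω m hu' (t - τ) (φ - ζ)) ?_
  calc h * spiralWave Ω m u (t - τ) s' (φ - ζ)
      = spiralWave Ω m u t s φ := (sub_eq_zero.mp hinv).symm
    _ = c * spiralWave Ω m u t s' φ := spiralWave.eq_mul_of_profile_eq_mul Ω m hsym t φ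
    _ = c * exp (I * (-Ω * τ + m * ζ)) * spiralWave Ω m u (t - τ) s' (φ - ζ) := by
      rw [spiralWave.eq_exp_mul_sub_sub Ω m u s' t τ φ ζ, mul_assoc]

/-- Uniqueness of the multiplicative factor for the reflection radial shift:
if the control term is noninvasive on a nontrivial m-armed spiral wave Ansatz
with ℤ₂-radial-symmetry of nodal class `j`, then necessarily
`h = (−1)^j · exp(i(−Ωτ + mζ))`. -/
theorem multiplicative_factor_unique_reflection_shift
    (Ω τ ζ sStar : ℝ) (m : ℤ) (j : ℕ) (h : ℂ) (u : ℝ → ℂ)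
    (hsym : ∀ s ∈ Set.Icc (0 : ℝ) sStar, u s = (-1 : ℂ) ^ j * u (sStar - s))
    (hu : ∃ s₀ ∈ Set.Icc (0 : ℝ) sStar, u s₀ ≠ 0)
    (Ψ : ℝ → ℝ → ℝ → ℂ)
    (hΨ : ∀ t s φ : ℝ,
      Ψ t s φ = Complex.exp (-Complex.I * Ω * t) * u s * Complex.exp (Complex.I * m * φ))
    (hinv : ∀ t φ : ℝ, ∀ s ∈ Set.Icc (0 : ℝ) sStar,
      Ψ t s φ - h * Ψ (t - τ) (sStar - s) (φ - ζ) = 0) :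
    h = (-1 : ℂ) ^ j * Complex.exp (Complex.I * (-Ω * τ + m * ζ)) := by
  obtain ⟨s₀, hs₀, hu₀⟩ := hu
  exact multiplicative_factor_unique_reflection_shift_general (t := τ) (φ := ζ) (hsym s₀ hs₀) hu₀
    (by simpa only [hΨ, spiralWave, ofReal_sub] using hinv τ ζ s₀ hs₀)
end

section
/- (Failure of stabilization by pure time delays.) Let μ₀* > 0, b ∈ ℝ, and τ ≥ 0. Then the function J(μ) = μ − μ₀* + b·(1 − exp(−τμ)) has a positive zero: there exists μ̃ > 0 with μ̃ − μ₀* + b·(1 − exp(−τμ̃)) = 0. Consequently, for pure temporal Pyragas control (space shift ζ = 0) the characteristic equations always admit a solution with positive real part μ̃ > 0 (and ν = 0), whenever the uncontrolled principal eigenvalue μ₀* is positive. -/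
/-! Zeros of `J` are the fixed points of `g μ = μ₀* - b (1 - exp (-τ μ))`. Without a spatial shift
the feedback vanishes at `μ = 0`, so `g 0 = μ₀* > 0`, and since `τ ≥ 0` it stays bounded on
`[0, ∞)`: the graph of `g` starts above the diagonal and must cross it. -/

open Set Function

theorem exists_gt_isFixedPt_of_bddAbove {α : Type*} [ConditionallyCompleteLinearOrder α]
    [DenselyOrdered α] [TopologicalSpace α] [OrderTopology α] {a : α} {g : α → α}
    (hcont : ContinuousOn g (Ici a)) (hbdd : BddAbove (g '' Ici a)) (ha : a < g a) :
    ∃ x, a < x ∧ IsFixedPt g x := by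
  obtain ⟨M, hM⟩ := hbdd
  have hgM : ∀ x ∈ Ici a, g x ≤ M := forall_mem_image.mp hM
  have haM : a ≤ M := ha.le.trans (hgM a self_mem_Ici)
  obtain ⟨x, hx, hfix⟩ := exists_mem_Icc_isFixedPt (hcont.mono Icc_subset_Ici_self) haM ha.le
    (hgM M haM)
  have hxa : x ≠ a := by
    rintro rfl
    exact ha.ne' hfix
  exact ⟨x, hx.1.lt_of_ne' hxa, hfix⟩

theorem abs_one_sub_exp_le_one {y : ℝ} (hy : y ≤ 0) : |1 - Real.exp y| ≤ 1 := by
  rw [abs_of_nonneg (sub_nonneg.mpr (Real.exp_le_one_iff.mpr hy))]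
  exact sub_le_self 1 (Real.exp_nonneg y)

theorem sub_mul_one_sub_exp_le (m b : ℝ) {y : ℝ} (hy : y ≤ 0) :
    m - b * (1 - Real.exp y) ≤ m + |b| :=
  calc m - b * (1 - Real.exp y) ≤ m + |b * (1 - Real.exp y)| := by
        linarith [neg_abs_le (b * (1 - Real.exp y))]
    _ = m + |b| * |1 - Real.exp y| := by rw [abs_mul]
    _ ≤ m + |b| := by
        gcongr
        exact mul_le_of_le_one_right (abs_nonneg b) (abs_one_sub_exp_le_one hy)

/-- Failure of stabilization by pure time delays: if the uncontrolled principal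
eigenvalue `μ₀* > 0`, then for any feedback gain `b ∈ ℝ` and delay `τ ≥ 0` the
function `J(μ) = μ − μ₀* + b·(1 − exp(−τμ))` has a positive zero, i.e. the
characteristic equations admit a solution with positive real part. -/
theorem pure_time_delay_fails
    (μStar b τ : ℝ) (hμ : 0 < μStar) (hτ : 0 ≤ τ) :
    ∃ μt : ℝ, 0 < μt ∧ μt - μStar + b * (1 - Real.exp (-τ * μt)) = 0 := by
  let g : ℝ → ℝ := fun μ => μStar - b * (1 - Real.exp (-τ * μ))
  have hcont : ContinuousOn g (Ici 0) := by fun_prop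
  have hbdd : BddAbove (g '' Ici 0) :=
    ⟨μStar + |b|, forall_mem_image.mpr fun _ hμ_nonneg =>
      sub_mul_one_sub_exp_le μStar b
        (mul_nonpos_of_nonpos_of_nonneg (neg_nonpos.mpr hτ) hμ_nonneg)⟩
  have hg_zero : g 0 = μStar := by simp [g]
  obtain ⟨μt, hμt_pos, hfix⟩ :=
    exists_gt_isFixedPt_of_bddAbove hcont hbdd (hμ.trans_eq hg_zero.symm)
  have hg_eq : μStar - b * (1 - Real.exp (-τ * μt)) = μt := hfix
  exact ⟨μt, hμt_pos, by linarith⟩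
end

section
/- Let δ > 0, b < 0, τ ≥ 0, and let μ, ν, μ̂ ∈ ℝ satisfy μ̂ ≤ −2δ, μ ≥ −δ, and the squared characteristic relation (|b| + μ − μ̂)² + ν² = b²·e^{−2τμ}. Then the time delay obeys the lower bound τ ≥ (1/(2δ))·log((1 + μ/|b| − μ̂/|b|)² + ν²/b²) ≥ (1/δ)·log(1 + δ/|b|) > 0. -/
/-!
Dividing the squared characteristic relation by `b²` turns it into
`(1 + μ/|b| − μ̂/|b|)² + ν²/b² = e^{−2τμ}`. The logarithm of the right-hand side is `−2τμ`,
which is at most `2δτ` because `μ ≥ −δ`. On the left, the gap `μ − μ̂ ≥ δ` forces the value to be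
at least `(1 + δ/|b|)²`.
-/

section CharacteristicRelation

variable {K : Type*} [Field K] [LinearOrder K] [IsStrictOrderedRing K] {b c d x y z : K}

lemma ne_zero_of_abs_add_sub_sq_add_sq_eq (hyx : y < x)
    (h : (|b| + x - y) ^ 2 + z ^ 2 = b ^ 2 * c) : b ≠ 0 := by
  rintro rfl
  have hpos : 0 < (x - y) ^ 2 := pow_pos (sub_pos.mpr hyx) 2
  have hzero : (x - y) ^ 2 + z ^ 2 = 0 := by simpa using h
  linarith [sq_nonneg z]

lemma one_add_div_abs_sub_sq_add_sq_eq (hb : b ≠ 0)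
    (h : (|b| + x - y) ^ 2 + z ^ 2 = b ^ 2 * c) :
    (1 + x / |b| - y / |b|) ^ 2 + z ^ 2 / b ^ 2 = c := by
  have habs : |b| ≠ 0 := abs_ne_zero.mpr hb
  calc (1 + x / |b| - y / |b|) ^ 2 + z ^ 2 / b ^ 2
      = ((|b| + x - y) ^ 2 + z ^ 2) / b ^ 2 := by
        rw [← sq_abs b]
        field_simp
    _ = c := by rw [h, mul_div_cancel_left₀ c (pow_ne_zero 2 hb)]

lemma one_add_div_abs_sq_le (hd : 0 ≤ d) (hgap : d ≤ x - y) :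
    (1 + d / |b|) ^ 2 ≤ (1 + x / |b| - y / |b|) ^ 2 + z ^ 2 / b ^ 2 :=
  calc (1 + d / |b|) ^ 2 ≤ (1 + (x - y) / |b|) ^ 2 := by gcongr
    _ = (1 + x / |b| - y / |b|) ^ 2 := by ring
    _ ≤ (1 + x / |b| - y / |b|) ^ 2 + z ^ 2 / b ^ 2 := le_add_of_nonneg_right (by positivity)

end CharacteristicRelation

lemma log_exp_neg_two_mul_mul_le {δ τ μ : ℝ} (hτ : 0 ≤ τ) (hμ : -δ ≤ μ) :
    Real.log (Real.exp (-2 * τ * μ)) ≤ 2 * δ * τ := by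
  rw [Real.log_exp]
  linarith [mul_le_mul_of_nonneg_left hμ hτ]

lemma two_mul_log_le_log_of_sq_le {a x : ℝ} (ha : 0 < a) (h : a ^ 2 ≤ x) :
    2 * Real.log a ≤ Real.log x := by
  simpa only [Real.log_pow, Nat.cast_ofNat] using Real.log_le_log (pow_pos ha 2) h

theorem delay_lower_bound_general
    (δ b τ μ ν μhat : ℝ) (hδ : 0 < δ) (hτ : 0 ≤ τ)
    (hμhat : μhat ≤ -2 * δ) (hμ : -δ ≤ μ)
    (hsq : (|b| + μ - μhat) ^ 2 + ν ^ 2 = b ^ 2 * Real.exp (-2 * τ * μ)) :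
    τ ≥ (1 / (2 * δ)) * Real.log ((1 + μ / |b| - μhat / |b|) ^ 2 + ν ^ 2 / b ^ 2) ∧
    (1 / (2 * δ)) * Real.log ((1 + μ / |b| - μhat / |b|) ^ 2 + ν ^ 2 / b ^ 2) ≥
      (1 / δ) * Real.log (1 + δ / |b|) ∧
    0 < (1 / δ) * Real.log (1 + δ / |b|) := by
  have hb : b ≠ 0 := ne_zero_of_abs_add_sub_sq_add_sq_eq (by linarith) hsq
  have hratio : 0 < δ / |b| := div_pos hδ (abs_pos.mpr hb)
  refine ⟨?_, ?_, mul_pos (one_div_pos.mpr hδ) (Real.log_pos (by linarith))⟩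
  · rw [one_add_div_abs_sub_sq_add_sq_eq hb hsq, ge_iff_le, one_div,
      inv_mul_le_iff₀ (by positivity)]
    exact log_exp_neg_two_mul_mul_le hτ hμ
  · have hsq_le : (1 + δ / |b|) ^ 2 ≤ (1 + μ / |b| - μhat / |b|) ^ 2 + ν ^ 2 / b ^ 2 :=
      one_add_div_abs_sq_le hδ.le (by linarith)
    calc (1 / δ) * Real.log (1 + δ / |b|)
        = (1 / (2 * δ)) * (2 * Real.log (1 + δ / |b|)) := by field_simp
      _ ≤ (1 / (2 * δ)) * Real.log ((1 + μ / |b| - μhat / |b|) ^ 2 + ν ^ 2 / b ^ 2) := by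
        gcongr
        exact two_mul_log_le_log_of_sq_le (by positivity) hsq_le

/-- Lower bound for the time delay: if `μ̂ ≤ −2δ`, `μ ≥ −δ` and the squared
characteristic relation `(|b| + μ − μ̂)² + ν² = b²·e^{−2τμ}` holds, then
`τ ≥ (1/(2δ))·log((1 + μ/|b| − μ̂/|b|)² + ν²/b²) ≥ (1/δ)·log(1 + δ/|b|) > 0`. -/
theorem delay_lower_bound
    (δ b τ μ ν μhat : ℝ) (hδ : 0 < δ) (hb : b < 0) (hτ : 0 ≤ τ)
    (hμhat : μhat ≤ -2 * δ) (hμ : -δ ≤ μ)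
    (hsq : (|b| + μ - μhat) ^ 2 + ν ^ 2 = b ^ 2 * Real.exp (-2 * τ * μ)) :
    τ ≥ (1 / (2 * δ)) * Real.log ((1 + μ / |b| - μhat / |b|) ^ 2 + ν ^ 2 / b ^ 2) ∧
    (1 / (2 * δ)) * Real.log ((1 + μ / |b| - μhat / |b|) ^ 2 + ν ^ 2 / b ^ 2) ≥
      (1 / δ) * Real.log (1 + δ / |b|) ∧
    0 < (1 / δ) * Real.log (1 + δ / |b|) :=
  delay_lower_bound_general δ b τ μ ν μhat hδ hτ hμhat hμ hsq
end

section
/- (Persistence of the spectral gap under small time delays.) Let δ > 0, b < 0, and define τ̲ = (1/δ)·log(1 + δ/|b|) > 0. Let τ ∈ [0, τ̲), let χ ∈ {−1, 1}, θ ∈ ℝ, and let μ̂ ≤ −2δ. Then every solution (μ, ν) ∈ ℝ² of the characteristic equations μ = μ̂ + b·(1 + χ·e^{−τμ}·cos θ) and ν = χ·b·e^{−τμ}·sin θ satisfies μ < −δ. -/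
/-!
If `-δ ≤ μ`, then the delay amplifies the feedback by at most
`exp (-τ * μ) ≤ exp (τ * δ) < 1 + γ / |b|`. Since `κ = χ * cos θ` is at least `-1`, the feedback
moves the uncontrolled eigenvalue to the right by at most `|b| * (exp (-τ * μ) - 1) < γ`. An
uncontrolled eigenvalue `μhat ≤ -(δ + γ)` thus gives `μ < -δ` after all. The threshold `τ̲` is the
case `γ = δ`.
-/

theorem exp_neg_mul_lt_of_mul_lt_log {δ τ μ x : ℝ} (hx : 0 < x) (hτ0 : 0 ≤ τ)
    (hτδ : τ * δ < Real.log x) (hμ : -δ ≤ μ) : Real.exp (-τ * μ) < x := by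
  rw [← Real.lt_log_iff_exp_lt hx]
  calc
    -τ * μ = τ * -μ := by ring
    _ ≤ τ * δ := mul_le_mul_of_nonneg_left (neg_le.mp hμ) hτ0
    _ < Real.log x := hτδ

theorem mul_one_add_mul_le_abs_mul_sub_one {b κ E : ℝ} (hb : b ≤ 0) (hκ : -1 ≤ κ)
    (hE : 0 ≤ E) : b * (1 + κ * E) ≤ |b| * (E - 1) := by
  have hκE : -1 * E ≤ κ * E := mul_le_mul_of_nonneg_right hκ hE
  calc
    b * (1 + κ * E) ≤ b * (1 + -1 * E) :=
      mul_le_mul_of_nonpos_left (by linarith) hb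
    _ = |b| * (E - 1) := by rw [abs_of_nonpos hb]; ring

theorem neg_one_le_mul_cos {χ : ℝ} (hχ : |χ| ≤ 1) (θ : ℝ) : -1 ≤ χ * Real.cos θ := by
  refine neg_le_of_abs_le ?_
  rw [abs_mul]
  exact mul_le_one₀ hχ (abs_nonneg _) (Real.abs_cos_le_one θ)

theorem spectral_gap_persists_general {δ γ b τ κ μhat μ : ℝ} (hδ : 0 < δ) (hγ : 0 < γ)
    (hb : b < 0) (hτ0 : 0 ≤ τ) (hτ : τ < (1 / δ) * Real.log (1 + γ / |b|))
    (hκ : -1 ≤ κ) (hμhat : μhat ≤ -(δ + γ))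
    (hμ : μ ≤ μhat + b * (1 + κ * Real.exp (-τ * μ))) :
    μ < -δ := by
  by_contra! hδμ
  have hb' : 0 < |b| := abs_pos_of_neg hb
  have hτδ : τ * δ < Real.log (1 + γ / |b|) := by
    rwa [one_div_mul_eq_div, lt_div_iff₀ hδ] at hτ
  have amplification : Real.exp (-τ * μ) < 1 + γ / |b| :=
    exp_neg_mul_lt_of_mul_lt_log (by positivity) hτ0 hτδ hδμ
  have shift : b * (1 + κ * Real.exp (-τ * μ)) < γ := calc
    b * (1 + κ * Real.exp (-τ * μ)) ≤ |b| * (Real.exp (-τ * μ) - 1) :=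
      mul_one_add_mul_le_abs_mul_sub_one hb.le hκ (Real.exp_nonneg _)
    _ < γ := by rwa [← lt_div_iff₀' hb', sub_lt_iff_lt_add']
  linarith

/-- Persistence of the spectral gap under small time delays: for `b < 0` and
`τ` below the threshold `τ̲ = (1/δ)·log(1 + δ/|b|)`, every solution of the
characteristic equations arising from an uncontrolled eigenvalue `μ̂ ≤ −2δ`
satisfies `μ < −δ`. -/
theorem spectral_gap_persists
    (δ b : ℝ) (hδ : 0 < δ) (hb : b < 0)
    (τ : ℝ) (hτ0 : 0 ≤ τ) (hτ : τ < (1 / δ) * Real.log (1 + δ / |b|))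
    (χ : ℝ) (hχ : χ = -1 ∨ χ = 1) (θ : ℝ) (μhat : ℝ) (hμhat : μhat ≤ -2 * δ)
    (μ ν : ℝ)
    (h1 : μ = μhat + b * (1 + χ * Real.exp (-τ * μ) * Real.cos θ))
    (h2 : ν = χ * b * Real.exp (-τ * μ) * Real.sin θ) :
    μ < -δ := by
  rw [mul_right_comm χ] at h1
  exact spectral_gap_persists_general hδ hδ hb hτ0 hτ
    (neg_one_le_mul_cos ((abs_eq zero_le_one).mpr hχ.symm).le θ) (by linarith) h1.le
end
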